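/- arXiv:math/0007200 — 2 statements merged into one kernel-verified Lean document; each statement's English description precedes it below -/
import Mathlib

section
/- There exists a constant C = C(m₁, m₂) such that for every s ∈ ℝ and every measurable function F : (0,∞) → [0,∞], e^{ρ s} ∫_{ℝ^{m₁} × ℝ^{m₂}} F(T_s(v,w)) dv dw ≤ C · ‖F‖_{L^{2,1}(ν)}, where ν is the measure (sinh t)^{m₁} (sinh 2t)^{m₂} dt on (0,∞) and ‖F‖_{L^{2,1}(ν)} = 2 ∫₀^∞ ν({t : F(t) > λ})^{1/2} dλ. (This is the coordinate form of Proposition 2: the Abel transform is bounded from L^{2,1}(G//K) to L^∞(A/W).) -/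
/-!
The dilation of `N` by `e^{s/2}` has Jacobian `e^{ρ s}` and turns the left-hand side into
`∫ F(arcosh y) dσ(y)`, where `σ` is the distribution of `y = √((c + |v|²)² + |w|²)` and
`c = cosh s`. By the layer-cake formula it is enough to bound `σ(S)²` by `K ν(arcosh S)` for all
`S`, with `K` independent of `s`.

By symmetry `σ(S)² = (σ × σ)(S × S)` is at most twice the integral over `S` of `y ↦ σ(Iic y)`
against `σ`. Along the dilations by `r`, `r ∂_r y ≥ 2 (y - c)`; averaging over `r ∈ (1, 2)` thus
replaces `dσ(y)` by a multiple of `σ(Iic y) (y - c)⁻¹ dy`. Since `{· ≤ y}` lies in a product of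
balls, `σ(Iic y)² ≲ (y - c)^{m₁} (2 y (y - c))^{m₂}`. Finally, `y = cosh t` satisfies
`y - c ≤ sinh t`, so `σ(Iic y)² (y - c)⁻¹ dy ≲ (sinh t)^{m₁} (sinh 2t)^{m₂} dt`.
-/

open MeasureTheory ENNReal NNReal

noncomputable section

/-- The measure `ν = (sinh t)^{m₁} (sinh 2t)^{m₂} dt` on `(0,∞)`. -/
def nuMeasure (m₁ m₂ : ℕ) : Measure ℝ :=
  ((volume : Measure ℝ).restrict (Set.Ioi 0)).withDensity
    fun t => ENNReal.ofReal (Real.sinh t ^ m₁ * Real.sinh (2 * t) ^ m₂)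

/-- The Lorentz quasi-norm `‖F‖_{L^{2,1}(ν)} = 2 ∫₀^∞ ν({t : F t > λ})^{1/2} dλ`. -/
def lorentz21 {α : Type*} [MeasurableSpace α] (μ : Measure α) (f : α → ℝ≥0∞) : ℝ≥0∞ :=
  2 * ∫⁻ l in Set.Ioi (0 : ℝ), (μ {x | ENNReal.ofReal l < f x}) ^ (1 / 2 : ℝ)

open Module Set
open scoped Topology

section Measure

variable {α : Type*} [MeasurableSpace α]

lemma lintegral_eq_lintegral_Ioi_measure_lt (μ : Measure α) [SFinite μ] {f : α → ℝ≥0∞}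
    (hf : Measurable f) :
    ∫⁻ x, f x ∂μ = ∫⁻ l in Ioi (0 : ℝ), μ {x | ENNReal.ofReal l < f x} := by
  have hsub : MeasurableSet {p : α × ℝ | ENNReal.ofReal p.2 < f p.1} :=
    measurableSet_lt (by fun_prop) (by fun_prop)
  have hslice (y : ℝ≥0∞) :
      volume.restrict (Ioi (0 : ℝ)) {l | ENNReal.ofReal l < y} = y := by
    rw [Measure.restrict_apply (measurableSet_lt (by fun_prop) (by fun_prop))]
    rcases eq_or_ne y ⊤ with rfl | hy
    · simp
    · have : {l | ENNReal.ofReal l < y} ∩ Ioi 0 = Ioo 0 y.toReal := by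
        ext l
        simpa [and_comm (a := 0 < l)] using
          fun hl : 0 < l ↦ ENNReal.ofReal_lt_iff_lt_toReal hl.le hy
      rw [this, Real.volume_Ioo, sub_zero, ENNReal.ofReal_toReal hy]
  calc ∫⁻ x, f x ∂μ
      = (μ.prod (volume.restrict (Ioi (0 : ℝ)))) {p | ENNReal.ofReal p.2 < f p.1} := by
        rw [Measure.prod_apply hsub]
        exact lintegral_congr fun x ↦ (hslice (f x)).symm
    _ = ∫⁻ l in Ioi (0 : ℝ), μ {x | ENNReal.ofReal l < f x} := Measure.prod_apply_symm hsub

lemma two_mul_lintegral_le_mul_lorentz21 {μ ν : Measure α} [SFinite μ] {K : ℝ≥0∞} (hK : K ≠ ⊤)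
    (h : ∀ S, MeasurableSet S → μ S ^ 2 ≤ K * ν S) {f : α → ℝ≥0∞} (hf : Measurable f) :
    2 * ∫⁻ x, f x ∂μ ≤ K ^ (1 / 2 : ℝ) * lorentz21 ν f := by
  have hsqrt (S : Set α) (hS : MeasurableSet S) :
      μ S ≤ K ^ (1 / 2 : ℝ) * ν S ^ (1 / 2 : ℝ) := by
    rw [← ENNReal.mul_rpow_of_nonneg _ _ (by positivity), one_div,
      ENNReal.le_rpow_inv_iff two_pos]
    exact_mod_cast h S hS
  have hK' : K ^ (1 / 2 : ℝ) ≠ ⊤ := ENNReal.rpow_ne_top_of_nonneg (by positivity) hK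
  rw [lorentz21, mul_left_comm, ← lintegral_const_mul' _ _ hK',
    lintegral_eq_lintegral_Ioi_measure_lt μ hf]
  gcongr with l
  exact hsqrt _ (measurableSet_lt measurable_const hf)

variable [LinearOrder α] [TopologicalSpace α] [OrderClosedTopology α]
  [SecondCountableTopology α] [OpensMeasurableSpace α]

lemma measure_univ_sq_le_two_mul_lintegral_measure_Iic (μ : Measure α) [SFinite μ] :
    μ univ ^ 2 ≤ 2 * ∫⁻ x, μ (Iic x) ∂μ := by
  have hle : MeasurableSet {p : α × α | p.1 ≤ p.2} := measurableSet_le (by fun_prop) (by fun_prop)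
  have hge : MeasurableSet {p : α × α | p.2 ≤ p.1} := measurableSet_le (by fun_prop) (by fun_prop)
  have hcover : {p : α × α | p.1 ≤ p.2} ∪ {p | p.2 ≤ p.1} = univ :=
    eq_univ_of_forall fun p ↦ le_total p.1 p.2
  calc μ univ ^ 2 = μ.prod μ univ := by
        rw [sq, ← Measure.prod_prod, univ_prod_univ]
    _ ≤ μ.prod μ {p | p.1 ≤ p.2} + μ.prod μ {p | p.2 ≤ p.1} := by
        rw [← hcover]
        exact measure_union_le _ _
    _ = 2 * ∫⁻ x, μ (Iic x) ∂μ := by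
        rw [Measure.prod_apply_symm hle, Measure.prod_apply hge, two_mul]
        rfl

lemma measure_sq_le_two_mul_setLIntegral_measure_Iic (μ : Measure α) [SFinite μ] (S : Set α) :
    μ S ^ 2 ≤ 2 * ∫⁻ x in S, μ (Iic x) ∂μ := by
  have h := measure_univ_sq_le_two_mul_lintegral_measure_Iic (μ.restrict S)
  rw [Measure.restrict_apply_univ] at h
  refine h.trans ?_
  gcongr
  exact Measure.restrict_le_self

lemma lintegral_setLIntegral_Ici_eq {Ω : Type*} [MeasurableSpace Ω] (μ : Measure Ω)
    (ν : Measure α) [SFinite μ] [SFinite ν] {X : Ω → α} (hX : Measurable X) {g : α → ℝ≥0∞}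
    (hg : Measurable g) :
    ∫⁻ ω, (∫⁻ y in Ici (X ω), g y ∂ν) ∂μ = ∫⁻ y, μ.map X (Iic y) * g y ∂ν := by
  have hle : MeasurableSet {p : Ω × α | X p.1 ≤ p.2} :=
    measurableSet_le (by fun_prop) (by fun_prop)
  have hmeas : Measurable ({p : Ω × α | X p.1 ≤ p.2}.indicator fun p ↦ g p.2) :=
    (hg.comp measurable_snd).indicator hle
  calc ∫⁻ ω, (∫⁻ y in Ici (X ω), g y ∂ν) ∂μ
      = ∫⁻ ω, ∫⁻ y, {p : Ω × α | X p.1 ≤ p.2}.indicator (fun p ↦ g p.2) (ω, y) ∂ν ∂μ :=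
        lintegral_congr fun ω ↦ (lintegral_indicator measurableSet_Ici g).symm
    _ = ∫⁻ y, ∫⁻ ω, (X ⁻¹' Iic y).indicator (fun _ ↦ g y) ω ∂μ ∂ν :=
        lintegral_lintegral_swap hmeas.aemeasurable
    _ = ∫⁻ y, μ.map X (Iic y) * g y ∂ν := by
        simp only [lintegral_indicator_const (hX measurableSet_Iic),
          Measure.map_apply hX measurableSet_Iic, mul_comm]

end Measure

lemma measurable_arcosh : Measurable Real.arcosh := by
  unfold Real.arcosh
  fun_prop

lemma image_cosh_Ioi {s : ℝ} (hs : 0 ≤ s) : Real.cosh '' Ioi s = Ioi (Real.cosh s) := by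
  ext y
  simp only [mem_image, mem_Ioi]
  constructor
  · rintro ⟨t, ht, rfl⟩
    exact Real.cosh_strictMonoOn hs (hs.trans ht.le) ht
  · intro hy
    have hy1 : 1 ≤ y := (Real.one_le_cosh s).trans hy.le
    refine ⟨Real.arcosh y, ?_, Real.cosh_arcosh hy1⟩
    rwa [← Real.arcosh_cosh hs, Real.arcosh_lt_arcosh (Real.cosh_pos s) (by linarith)]

lemma lintegral_Ioi_cosh {s : ℝ} (hs : 0 ≤ s) (g : ℝ → ℝ≥0∞) :
    ∫⁻ y in Ioi (Real.cosh s), g y =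
      ∫⁻ t in Ioi s, ENNReal.ofReal (Real.sinh t) * g (Real.cosh t) := by
  rw [← image_cosh_Ioi hs]
  exact lintegral_image_eq_lintegral_deriv_mul_of_monotoneOn measurableSet_Ioi
    (fun t _ ↦ (Real.hasDerivAt_cosh t).hasDerivWithinAt)
    (Real.cosh_strictMonoOn.monotoneOn.mono (Ioi_subset_Ici hs)) g

lemma setLIntegral_comp_le_setLIntegral_image {φ : ℝ → ℝ} {s : Set ℝ} (hs : MeasurableSet s)
    (hφ : Differentiable ℝ φ) (hmono : MonotoneOn φ s) {ψ : ℝ → ℝ}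
    (hψ : ∀ r ∈ s, 0 < ψ (φ r)) (hle : ∀ r ∈ s, ψ (φ r) ≤ deriv φ r) (g : ℝ → ℝ≥0∞) :
    ∫⁻ r in s, g (φ r) ≤ ∫⁻ y in φ '' s, ENNReal.ofReal (ψ y)⁻¹ * g y := by
  rw [lintegral_image_eq_lintegral_deriv_mul_of_monotoneOn hs
    (fun r _ ↦ (hφ r).hasDerivAt.hasDerivWithinAt) hmono]
  refine setLIntegral_mono' hs fun r hr ↦ ?_
  have hone : 1 ≤ deriv φ r * (ψ (φ r))⁻¹ := by
    rw [← div_eq_mul_inv, one_le_div (hψ r hr)]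
    exact hle r hr
  rw [← mul_assoc, ← ENNReal.ofReal_mul ((hψ r hr).le.trans (hle r hr))]
  exact le_mul_of_one_le_left' (ENNReal.one_le_ofReal.2 hone)

lemma mul_inv_mul_pow_mul_pow_le {m n : ℕ} (hmn : m + n ≠ 0) {a x y : ℝ} (ha : 0 ≤ a) (hx : 0 < x)
    (hxy : x ≤ y) : y * (x⁻¹ * (x ^ m * (a * x) ^ n)) ≤ y ^ m * (a * y) ^ n := by
  obtain ⟨j, hj⟩ := Nat.exists_eq_succ_of_ne_zero hmn
  have hpow (z : ℝ) : z ^ m * (a * z) ^ n = a ^ n * z ^ j * z := by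
    rw [mul_pow, mul_left_comm, ← pow_add, hj, pow_succ, mul_assoc]
  have hy : 0 ≤ y := hx.le.trans hxy
  calc y * (x⁻¹ * (x ^ m * (a * x) ^ n)) = a ^ n * x ^ j * y := by
        rw [hpow]
        field_simp
    _ ≤ a ^ n * y ^ j * y := by gcongr
    _ = y ^ m * (a * y) ^ n := (hpow y).symm

lemma cosh_sub_cosh_le_sinh (s : ℝ) {t : ℝ} (ht : 0 ≤ t) :
    Real.cosh t - Real.cosh s ≤ Real.sinh t := by
  linarith [Real.cosh_sub_sinh t, Real.one_le_cosh s, Real.exp_le_one_iff.2 (neg_nonpos.2 ht)]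

lemma setLIntegral_Ioi_cosh_le_nuMeasure {m n : ℕ} (hmn : m + n ≠ 0) {s : ℝ} (hs : 0 ≤ s)
    {S : Set ℝ} (hS : MeasurableSet S) :
    ∫⁻ y in Ioi (Real.cosh s), (Real.arcosh ⁻¹' S).indicator (fun y ↦
        ENNReal.ofReal ((y - Real.cosh s)⁻¹ *
          ((y - Real.cosh s) ^ m * (2 * y * (y - Real.cosh s)) ^ n))) y ≤
      nuMeasure m n S := by
  rw [nuMeasure, withDensity_apply _ hS, ← lintegral_indicator hS, lintegral_Ioi_cosh hs]
  refine (setLIntegral_mono' measurableSet_Ioi fun t (ht : s < t) ↦ ?_).trans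
    (lintegral_mono_set (Ioi_subset_Ioi hs))
  have ht0 : 0 ≤ t := hs.trans ht.le
  have hpos : 0 < Real.cosh t - Real.cosh s := sub_pos.2 (Real.cosh_strictMonoOn hs ht0 ht)
  by_cases htS : t ∈ S
  · have htS' : Real.cosh t ∈ Real.arcosh ⁻¹' S := by rwa [mem_preimage, Real.arcosh_cosh ht0]
    rw [indicator_of_mem htS, indicator_of_mem htS', Real.sinh_two_mul,
      mul_right_comm 2 (Real.sinh t), ← ENNReal.ofReal_mul (Real.sinh_nonneg_iff.2 ht0)]
    exact ENNReal.ofReal_le_ofReal (mul_inv_mul_pow_mul_pow_le hmn (by positivity) hpos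
      (cosh_sub_cosh_le_sinh s ht0))
  · have htS' : Real.cosh t ∉ Real.arcosh ⁻¹' S := by rwa [mem_preimage, Real.arcosh_cosh ht0]
    simp [htS, htS']

section Group

variable {V W : Type*} [NormedAddCommGroup V] [NormedAddCommGroup W]

/-- The hyperbolic cosine of the radial part of the point of `NA` whose `A`-component is `a_s`,
in the coordinates of `N` for which the radial part depends on `s` only through `c = cosh s`. -/
def coshRadius (c : ℝ) (p : V × W) : ℝ :=
  √((c + ‖p.1‖ ^ 2) ^ 2 + ‖p.2‖ ^ 2)

lemma add_sq_norm_fst_le_coshRadius (c : ℝ) (p : V × W) : c + ‖p.1‖ ^ 2 ≤ coshRadius c p :=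
  Real.le_sqrt_of_sq_le (le_add_of_nonneg_right (sq_nonneg _))

lemma le_coshRadius (c : ℝ) (p : V × W) : c ≤ coshRadius c p :=
  (le_add_of_nonneg_right (sq_nonneg _)).trans (add_sq_norm_fst_le_coshRadius c p)

lemma sq_coshRadius (c : ℝ) (p : V × W) :
    coshRadius c p ^ 2 = (c + ‖p.1‖ ^ 2) ^ 2 + ‖p.2‖ ^ 2 :=
  Real.sq_sqrt (by positivity)

lemma lt_coshRadius (c : ℝ) {p : V × W} (hp : p ≠ 0) : c < coshRadius c p := by
  refine (le_coshRadius c p).lt_of_ne fun heq ↦ hp ?_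
  have hsq := sq_coshRadius c p
  have hv := add_sq_norm_fst_le_coshRadius c p
  rw [← heq] at hsq hv
  have hv0 : ‖p.1‖ = 0 := by nlinarith [sq_nonneg ‖p.1‖]
  have hw0 : ‖p.2‖ = 0 := by simpa [hv0] using hsq
  exact Prod.ext (norm_eq_zero.1 hv0) (norm_eq_zero.1 hw0)

lemma measurable_coshRadius [MeasurableSpace V] [OpensMeasurableSpace V] [MeasurableSpace W]
    [OpensMeasurableSpace W] (c : ℝ) : Measurable (coshRadius c : V × W → ℝ) := by
  unfold coshRadius
  fun_prop

variable [NormedSpace ℝ V] [NormedSpace ℝ W]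

/-- The dilations `(v, w) ↦ (r v, r² w)` of the two-step nilpotent group `N` with Lie algebra
`V ⊕ W`, where `W` is the centre. Conjugation by `a_s` is the dilation by `e^{s/2}`. -/
def nilpotentDilation (r : ℝ) : V × W → V × W :=
  Prod.map (r • ·) (r ^ 2 • ·)

lemma coshRadius_nilpotentDilation (c r : ℝ) (p : V × W) :
    coshRadius c (nilpotentDilation r p) =
      √((c + r ^ 2 * ‖p.1‖ ^ 2) ^ 2 + r ^ 4 * ‖p.2‖ ^ 2) := by
  simp only [coshRadius, nilpotentDilation, Prod.map, norm_smul, norm_pow, Real.norm_eq_abs,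
    mul_pow, sq_abs]
  ring_nf

lemma eq_arcosh_coshRadius_of_cosh_sq_eq {s t : ℝ} (ht : 0 ≤ t) {p : V × W}
    (h : Real.cosh t ^ 2 =
      (Real.cosh s + Real.exp s * ‖p.1‖ ^ 2) ^ 2 + Real.exp (2 * s) * ‖p.2‖ ^ 2) :
    t = Real.arcosh (coshRadius (Real.cosh s) (nilpotentDilation (Real.exp (s / 2)) p)) := by
  have hexp : Real.exp (s / 2) ^ 2 = Real.exp s := by rw [← Real.exp_nat_mul]; ring_nf
  have hexp' : Real.exp (s / 2) ^ 4 = Real.exp (2 * s) := by rw [← Real.exp_nat_mul]; ring_nf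
  rw [coshRadius_nilpotentDilation, hexp, hexp', ← h, Real.sqrt_sq (Real.cosh_pos t).le,
    Real.arcosh_cosh ht]

lemma nilpotentDilation_one (p : V × W) : nilpotentDilation 1 p = p := by
  simp [nilpotentDilation]

lemma hasDerivAt_coshRadius_nilpotentDilation {c : ℝ} (hc : 0 < c) (p : V × W) (r : ℝ) :
    HasDerivAt (fun r ↦ coshRadius c (nilpotentDilation r p))
      (2 * ((c + r ^ 2 * ‖p.1‖ ^ 2) * (r * ‖p.1‖ ^ 2) + r ^ 3 * ‖p.2‖ ^ 2) /
        coshRadius c (nilpotentDilation r p)) r := by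
  simp only [coshRadius_nilpotentDilation]
  have hv : HasDerivAt (fun r ↦ (c + r ^ 2 * ‖p.1‖ ^ 2) ^ 2)
      (2 * (c + r ^ 2 * ‖p.1‖ ^ 2) * (2 * r * ‖p.1‖ ^ 2)) r := by
    simpa using (((hasDerivAt_pow 2 r).mul_const (‖p.1‖ ^ 2)).const_add c).fun_pow 2
  have hw : HasDerivAt (fun r ↦ r ^ 4 * ‖p.2‖ ^ 2) (4 * r ^ 3 * ‖p.2‖ ^ 2) r := by
    simpa using (hasDerivAt_pow 4 r).mul_const (‖p.2‖ ^ 2)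
  have hne : (c + r ^ 2 * ‖p.1‖ ^ 2) ^ 2 + r ^ 4 * ‖p.2‖ ^ 2 ≠ 0 := by positivity
  convert (hv.fun_add hw).sqrt hne using 1
  rw [← mul_div_mul_left _ _ two_ne_zero]
  ring

lemma differentiable_coshRadius_nilpotentDilation {c : ℝ} (hc : 0 < c) (p : V × W) :
    Differentiable ℝ fun r ↦ coshRadius c (nilpotentDilation r p) :=
  fun r ↦ (hasDerivAt_coshRadius_nilpotentDilation hc p r).differentiableAt

lemma two_mul_coshRadius_sub_le_mul_deriv {c : ℝ} (hc : 0 < c) (p : V × W) (r : ℝ) :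
    2 * (coshRadius c (nilpotentDilation r p) - c) ≤
      r * deriv (fun r ↦ coshRadius c (nilpotentDilation r p)) r := by
  rw [(hasDerivAt_coshRadius_nilpotentDilation hc p r).deriv, coshRadius_nilpotentDilation]
  set A := ‖p.1‖ ^ 2
  set B := ‖p.2‖ ^ 2
  set a := √((c + r ^ 2 * A) ^ 2 + r ^ 4 * B)
  have hsq : a ^ 2 = (c + r ^ 2 * A) ^ 2 + r ^ 4 * B := Real.sq_sqrt (by positivity)
  have hle : c + r ^ 2 * A ≤ a := Real.le_sqrt_of_sq_le (le_add_of_nonneg_right (by positivity))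
  have ha0 : 0 < a := Real.sqrt_pos.2 (by positivity)
  rw [mul_div_assoc', le_div_iff₀ ha0]
  calc 2 * (a - c) * a = 2 * (a ^ 2 - c * a) := by ring
    _ ≤ 2 * (a ^ 2 - c * (c + r ^ 2 * A)) := by gcongr
    _ = r * (2 * ((c + r ^ 2 * A) * (r * A) + r ^ 3 * B)) := by rw [hsq]; ring

lemma monotoneOn_coshRadius_nilpotentDilation {c : ℝ} (hc : 0 ≤ c) (p : V × W) :
    MonotoneOn (fun r ↦ coshRadius c (nilpotentDilation r p)) (Ici 0) := by
  intro r (hr : 0 ≤ r) r' _ hrr'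
  simp only [coshRadius_nilpotentDilation]
  gcongr

lemma setLIntegral_coshRadius_nilpotentDilation_le {c : ℝ} (hc : 0 < c) {p : V × W} (hp : p ≠ 0)
    (g : ℝ → ℝ≥0∞) :
    ∫⁻ r in Ioo 1 2, g (coshRadius c (nilpotentDilation r p)) ≤
      ∫⁻ y in Ici (coshRadius c p), ENNReal.ofReal (y - c)⁻¹ * g y := by
  have hmono := monotoneOn_coshRadius_nilpotentDilation hc.le p
  have hge (r : ℝ) (hr : 1 < r) : coshRadius c p ≤ coshRadius c (nilpotentDilation r p) := by
    simpa [nilpotentDilation_one] using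
      hmono (mem_Ici.2 zero_le_one) (zero_le_one.trans hr.le) hr.le
  have hpos (r : ℝ) (hr : r ∈ Ioo 1 2) : 0 < coshRadius c (nilpotentDilation r p) - c :=
    sub_pos.2 ((lt_coshRadius c hp).trans_le (hge r hr.1))
  refine (setLIntegral_comp_le_setLIntegral_image (ψ := (· - c)) measurableSet_Ioo
    (differentiable_coshRadius_nilpotentDilation hc p) (hmono.mono fun r hr ↦ ?_) hpos
    (fun r hr ↦ ?_) g).trans (lintegral_mono_set (image_subset_iff.2 fun r hr ↦ hge r hr.1))
  · exact zero_le_one.trans hr.1.le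
  · nlinarith [two_mul_coshRadius_sub_le_mul_deriv hc p r, hpos r hr, hr.1, hr.2]

variable [FiniteDimensional ℝ V] [MeasurableSpace V] [BorelSpace V] (μ : Measure V)
  [μ.IsAddHaarMeasure] [FiniteDimensional ℝ W] [MeasurableSpace W] [BorelSpace W] (ν : Measure W)
  [ν.IsAddHaarMeasure]

lemma measurable_nilpotentDilation :
    Measurable fun q : ℝ × (V × W) ↦ nilpotentDilation q.1 q.2 := by
  unfold nilpotentDilation Prod.map
  fun_prop

lemma lintegral_comp_nilpotentDilation {r : ℝ} (hr : 0 < r) {f : V × W → ℝ≥0∞}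
    (hf : Measurable f) :
    ENNReal.ofReal (r ^ (finrank ℝ V + 2 * finrank ℝ W)) *
      ∫⁻ p, f (nilpotentDilation r p) ∂μ.prod ν = ∫⁻ p, f p ∂μ.prod ν := by
  have hmap : (μ.prod ν).map (nilpotentDilation r) =
      ENNReal.ofReal (r ^ (finrank ℝ V + 2 * finrank ℝ W))⁻¹ • μ.prod ν := by
    rw [nilpotentDilation, ← Measure.map_prod_map _ _ (by fun_prop) (by fun_prop),
      Measure.map_addHaar_smul μ hr.ne', Measure.map_addHaar_smul ν (by positivity),
      Measure.prod_smul_left, Measure.prod_smul_right, smul_smul,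
      ← ENNReal.ofReal_mul (by positivity), abs_of_pos (by positivity), abs_of_pos (by positivity),
      ← mul_inv, ← pow_mul, ← pow_add]
  have hmeas : Measurable (nilpotentDilation r : V × W → V × W) :=
    measurable_nilpotentDilation.comp measurable_prodMk_left
  rw [← lintegral_map hf hmeas, hmap,
    lintegral_smul_measure, smul_eq_mul, ← mul_assoc, ← ENNReal.ofReal_mul (by positivity),
    mul_inv_cancel₀ (by positivity), ENNReal.ofReal_one, one_mul]

lemma lintegral_comp_coshRadius_le_setLIntegral_dilation (c : ℝ) {g : ℝ → ℝ≥0∞}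
    (hg : Measurable g) :
    ∫⁻ p, g (coshRadius c p) ∂μ.prod ν ≤
      ENNReal.ofReal (2 ^ (finrank ℝ V + 2 * finrank ℝ W)) *
        ∫⁻ p, (∫⁻ r in Ioo 1 2, g (coshRadius c (nilpotentDilation r p))) ∂μ.prod ν := by
  set Q := finrank ℝ V + 2 * finrank ℝ W
  have hgr : Measurable fun p : V × W ↦ g (coshRadius c p) := hg.comp (measurable_coshRadius c)
  have hmeas : Measurable fun q : ℝ × (V × W) ↦ g (coshRadius c (nilpotentDilation q.1 q.2)) :=
    hgr.comp measurable_nilpotentDilation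
  calc ∫⁻ p, g (coshRadius c p) ∂μ.prod ν
      = ∫⁻ _ in Ioo (1 : ℝ) 2, ∫⁻ p, g (coshRadius c p) ∂μ.prod ν := by norm_num
    _ ≤ ∫⁻ r in Ioo (1 : ℝ) 2, ENNReal.ofReal (2 ^ Q) *
          ∫⁻ p, g (coshRadius c (nilpotentDilation r p)) ∂μ.prod ν := by
        refine setLIntegral_mono' measurableSet_Ioo fun r hr ↦ ?_
        have hr0 : 0 < r := one_pos.trans hr.1
        rw [← lintegral_comp_nilpotentDilation μ ν hr0 hgr]
        gcongr
        exact hr.2.le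
    _ = ENNReal.ofReal (2 ^ Q) *
          ∫⁻ p, (∫⁻ r in Ioo 1 2, g (coshRadius c (nilpotentDilation r p))) ∂μ.prod ν := by
        rw [lintegral_const_mul' _ _ ENNReal.ofReal_ne_top,
          lintegral_lintegral_swap hmeas.aemeasurable]

/-- The distribution of `coshRadius c` under Haar measure on `N`: the kernel of the Abel
transform at `a_s`, for `c = cosh s`, seen as a measure in the variable `cosh t`. -/
def coshRadiusMeasure (c : ℝ) : Measure ℝ :=
  (μ.prod ν).map (coshRadius c)

instance (c : ℝ) : SFinite (coshRadiusMeasure μ ν c) := by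
  unfold coshRadiusMeasure
  infer_instance

lemma lintegral_coshRadiusMeasure_le [Nontrivial (V × W)] {c : ℝ} (hc : 0 < c) {g : ℝ → ℝ≥0∞}
    (hg : Measurable g) :
    ∫⁻ y, g y ∂coshRadiusMeasure μ ν c ≤
      ENNReal.ofReal (2 ^ (finrank ℝ V + 2 * finrank ℝ W)) *
        ∫⁻ y in Ioi c, coshRadiusMeasure μ ν c (Iic y) * (ENNReal.ofReal (y - c)⁻¹ * g y) := by
  have : (𝓝[≠] (0 : V × W)).NeBot := Module.punctured_nhds_neBot ℝ (V × W) 0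
  have hmeas : Measurable fun y ↦ ENNReal.ofReal (y - c)⁻¹ * g y := by fun_prop
  have hpt (p : V × W) (hp : p ≠ 0) :
      ∫⁻ r in Ioo 1 2, g (coshRadius c (nilpotentDilation r p)) ≤
        ∫⁻ y in Ici (coshRadius c p), ENNReal.ofReal (y - c)⁻¹ * g y ∂volume.restrict (Ioi c) := by
    rw [Measure.restrict_restrict_of_subset (Ici_subset_Ioi.2 (lt_coshRadius c hp))]
    exact setLIntegral_coshRadius_nilpotentDilation_le hc hp g
  calc ∫⁻ y, g y ∂coshRadiusMeasure μ ν c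
      = ∫⁻ p, g (coshRadius c p) ∂μ.prod ν := lintegral_map hg (measurable_coshRadius c)
    _ ≤ _ := lintegral_comp_coshRadius_le_setLIntegral_dilation μ ν c hg
    _ ≤ ENNReal.ofReal (2 ^ (finrank ℝ V + 2 * finrank ℝ W)) *
          ∫⁻ p, (∫⁻ y in Ici (coshRadius c p), ENNReal.ofReal (y - c)⁻¹ * g y
            ∂volume.restrict (Ioi c)) ∂μ.prod ν := by
        gcongr _ * ?_
        exact lintegral_mono_ae ((Measure.ae_ne (μ.prod ν) 0).mono hpt)
    _ = _ := by
        rw [lintegral_setLIntegral_Ici_eq _ _ (measurable_coshRadius c) hmeas, coshRadiusMeasure]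

lemma coshRadiusMeasure_Iic_le {c y : ℝ} (hc : 0 ≤ c) (hcy : c ≤ y) :
    coshRadiusMeasure μ ν c (Iic y) ≤
      μ (Metric.ball 0 1) * ν (Metric.ball 0 1) *
        ENNReal.ofReal (√(y - c) ^ finrank ℝ V * √(2 * y * (y - c)) ^ finrank ℝ W) := by
  have hsub : coshRadius c ⁻¹' Iic y ⊆
      (Metric.closedBall 0 √(y - c) ×ˢ Metric.closedBall 0 √(2 * y * (y - c)) : Set (V × W)) := by
    intro p (hp : coshRadius c p ≤ y)
    have hv : ‖p.1‖ ^ 2 ≤ y - c := by linarith [add_sq_norm_fst_le_coshRadius c p]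
    have hw : ‖p.2‖ ^ 2 ≤ 2 * y * (y - c) := by
      have hsq : coshRadius c p ^ 2 ≤ y ^ 2 := by gcongr; exact Real.sqrt_nonneg _
      rw [sq_coshRadius] at hsq
      have hcv : c ^ 2 ≤ (c + ‖p.1‖ ^ 2) ^ 2 := by
        gcongr
        exact le_add_of_nonneg_right (sq_nonneg _)
      nlinarith
    exact ⟨by simpa using Real.le_sqrt_of_sq_le hv, by simpa using Real.le_sqrt_of_sq_le hw⟩
  calc coshRadiusMeasure μ ν c (Iic y)
      = μ.prod ν (coshRadius c ⁻¹' Iic y) :=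
        Measure.map_apply (measurable_coshRadius c) measurableSet_Iic
    _ ≤ μ (Metric.closedBall 0 √(y - c)) * ν (Metric.closedBall 0 √(2 * y * (y - c))) :=
        (measure_mono hsub).trans_eq (Measure.prod_prod _ _)
    _ = _ := by
        rw [Measure.addHaar_closedBall _ _ (Real.sqrt_nonneg _),
          Measure.addHaar_closedBall _ _ (Real.sqrt_nonneg _), ENNReal.ofReal_mul (by positivity)]
        ring

lemma coshRadiusMeasure_Iic_sq_le {c y : ℝ} (hc : 0 ≤ c) (hcy : c ≤ y) :
    coshRadiusMeasure μ ν c (Iic y) ^ 2 ≤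
      (μ (Metric.ball 0 1) * ν (Metric.ball 0 1)) ^ 2 *
        ENNReal.ofReal ((y - c) ^ finrank ℝ V * (2 * y * (y - c)) ^ finrank ℝ W) := by
  have hv : 0 ≤ y - c := sub_nonneg.2 hcy
  have hw : 0 ≤ 2 * y * (y - c) := mul_nonneg (by linarith) hv
  have hsq : (√(y - c) ^ finrank ℝ V * √(2 * y * (y - c)) ^ finrank ℝ W) ^ 2 =
      (y - c) ^ finrank ℝ V * (2 * y * (y - c)) ^ finrank ℝ W := by
    rw [mul_pow, pow_right_comm, pow_right_comm _ (finrank ℝ W), Real.sq_sqrt hv, Real.sq_sqrt hw]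
  rw [← hsq, ENNReal.ofReal_pow (by positivity), ← mul_pow]
  gcongr
  exact coshRadiusMeasure_Iic_le μ ν hc hcy

lemma coshRadiusMeasure_sq_le_setLIntegral [Nontrivial (V × W)] {c : ℝ} (hc : 0 < c) {S : Set ℝ}
    (hS : MeasurableSet S) :
    coshRadiusMeasure μ ν c S ^ 2 ≤
      2 * ENNReal.ofReal (2 ^ (finrank ℝ V + 2 * finrank ℝ W)) *
        ∫⁻ y in Ioi c, S.indicator (fun y ↦ ENNReal.ofReal (y - c)⁻¹ *
          coshRadiusMeasure μ ν c (Iic y) ^ 2) y := by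
  set σ := coshRadiusMeasure μ ν c
  have hmeas : Measurable fun y ↦ σ (Iic y) :=
    Monotone.measurable fun _ _ h ↦ measure_mono (Iic_subset_Iic.2 h)
  calc σ S ^ 2 ≤ 2 * ∫⁻ y, S.indicator (fun y ↦ σ (Iic y)) y ∂σ := by
        rw [lintegral_indicator hS]
        exact measure_sq_le_two_mul_setLIntegral_measure_Iic σ S
    _ ≤ 2 * (ENNReal.ofReal (2 ^ (finrank ℝ V + 2 * finrank ℝ W)) * ∫⁻ y in Ioi c,
          σ (Iic y) * (ENNReal.ofReal (y - c)⁻¹ * S.indicator (fun y ↦ σ (Iic y)) y)) := by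
        gcongr
        exact lintegral_coshRadiusMeasure_le μ ν hc (hmeas.indicator hS)
    _ = _ := by
        rw [← mul_assoc]
        congr! 3 with y
        by_cases hy : y ∈ S
        · simp only [indicator_of_mem hy]
          ring
        · simp [hy]

lemma coshRadiusMeasure_sq_le [Nontrivial (V × W)] {c : ℝ} (hc : 0 < c) {S : Set ℝ}
    (hS : MeasurableSet S) :
    coshRadiusMeasure μ ν c S ^ 2 ≤
      2 * ENNReal.ofReal (2 ^ (finrank ℝ V + 2 * finrank ℝ W)) *
        ((μ (Metric.ball 0 1) * ν (Metric.ball 0 1)) ^ 2 *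
          ∫⁻ y in Ioi c, S.indicator (fun y ↦ ENNReal.ofReal ((y - c)⁻¹ *
            ((y - c) ^ finrank ℝ V * (2 * y * (y - c)) ^ finrank ℝ W))) y) := by
  refine (coshRadiusMeasure_sq_le_setLIntegral μ ν hc hS).trans ?_
  have hB : (μ (Metric.ball 0 1) * ν (Metric.ball 0 1)) ^ 2 ≠ ⊤ := by finiteness
  rw [← lintegral_const_mul' _ _ hB]
  gcongr 2 * _ * ?_
  refine setLIntegral_mono' measurableSet_Ioi fun y (hy : c < y) ↦ ?_
  by_cases hyS : y ∈ S
  · simp only [indicator_of_mem hyS]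
    grw [coshRadiusMeasure_Iic_sq_le μ ν hc.le hy.le]
    rw [ENNReal.ofReal_mul (inv_nonneg.2 (sub_nonneg.2 hy.le)), mul_left_comm]
  · simp [hyS]

lemma map_arcosh_coshRadiusMeasure_sq_le [Nontrivial (V × W)] (s : ℝ) {S : Set ℝ}
    (hS : MeasurableSet S) :
    (coshRadiusMeasure μ ν (Real.cosh s)).map Real.arcosh S ^ 2 ≤
      2 * ENNReal.ofReal (2 ^ (finrank ℝ V + 2 * finrank ℝ W)) *
        (μ (Metric.ball 0 1) * ν (Metric.ball 0 1)) ^ 2 *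
          nuMeasure (finrank ℝ V) (finrank ℝ W) S := by
  have hdim : finrank ℝ V + finrank ℝ W ≠ 0 := by
    rw [← finrank_prod]
    exact finrank_pos.ne'
  rw [Measure.map_apply measurable_arcosh hS, mul_assoc]
  grw [coshRadiusMeasure_sq_le μ ν (Real.cosh_pos s) (measurable_arcosh hS),
    ← setLIntegral_Ioi_cosh_le_nuMeasure hdim (abs_nonneg s) hS, Real.cosh_abs]

lemma exp_mul_lintegral_comp_eq_lintegral_map_arcosh {s : ℝ} {τ : V × W → ℝ} (hτ : ∀ p, 0 ≤ τ p)
    (h : ∀ p, Real.cosh (τ p) ^ 2 =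
      (Real.cosh s + Real.exp s * ‖p.1‖ ^ 2) ^ 2 + Real.exp (2 * s) * ‖p.2‖ ^ 2)
    {F : ℝ → ℝ≥0∞} (hF : Measurable F) :
    ENNReal.ofReal (Real.exp (((finrank ℝ V : ℝ) + 2 * (finrank ℝ W : ℝ)) / 2 * s)) *
        ∫⁻ p, F (τ p) ∂μ.prod ν =
      ∫⁻ t, F t ∂(coshRadiusMeasure μ ν (Real.cosh s)).map Real.arcosh := by
  have hjac : Real.exp (((finrank ℝ V : ℝ) + 2 * (finrank ℝ W : ℝ)) / 2 * s) =
      Real.exp (s / 2) ^ (finrank ℝ V + 2 * finrank ℝ W) := by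
    rw [← Real.exp_nat_mul]
    push_cast
    ring_nf
  have hcosh : Measurable (coshRadius (Real.cosh s) : V × W → ℝ) := measurable_coshRadius _
  have hdil := lintegral_comp_nilpotentDilation μ ν (Real.exp_pos (s / 2))
    (hF.comp (measurable_arcosh.comp hcosh))
  rw [coshRadiusMeasure, Measure.map_map measurable_arcosh hcosh,
    lintegral_map hF (measurable_arcosh.comp hcosh), hjac]
  simpa only [Function.comp_apply, ← eq_arcosh_coshRadius_of_cosh_sq_eq (hτ _) (h _)] using hdil

theorem abel_transform_L21_Linfty_general [Nontrivial (V × W)] (T : ℝ → V → W → ℝ)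
    (hT : ∀ s v w, |s| ≤ T s v w ∧
      Real.cosh (T s v w) ^ 2 =
        (Real.cosh s + Real.exp s * ‖v‖ ^ 2) ^ 2 + Real.exp (2 * s) * ‖w‖ ^ 2) :
    ∃ C : ℝ≥0, ∀ (s : ℝ) (F : ℝ → ℝ≥0∞), Measurable F →
      ENNReal.ofReal (Real.exp (((finrank ℝ V : ℝ) + 2 * (finrank ℝ W : ℝ)) / 2 * s)) *
          ∫⁻ p, F (T s p.1 p.2) ∂μ.prod ν ≤
        C * lorentz21 (nuMeasure (finrank ℝ V) (finrank ℝ W)) F := by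
  set K : ℝ≥0∞ := 2 * ENNReal.ofReal (2 ^ (finrank ℝ V + 2 * finrank ℝ W)) *
    (μ (Metric.ball 0 1) * ν (Metric.ball 0 1)) ^ 2
  have hK : K ≠ ⊤ := by finiteness
  have hK' : K ^ (1 / 2 : ℝ) ≠ ⊤ := ENNReal.rpow_ne_top_of_nonneg (by positivity) hK
  refine ⟨(K ^ (1 / 2 : ℝ)).toNNReal, fun s F hF ↦ ?_⟩
  rw [ENNReal.coe_toNNReal hK', exp_mul_lintegral_comp_eq_lintegral_map_arcosh μ ν
    (fun p ↦ (abs_nonneg s).trans (hT s p.1 p.2).1) (fun p ↦ (hT s p.1 p.2).2) hF]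
  exact (le_mul_of_one_le_left' one_le_two).trans (two_mul_lintegral_le_mul_lorentz21 hK
    (fun S hS ↦ map_arcosh_coshRadiusMeasure_sq_le μ ν s hS) hF)

end Group

/-- **Proposition 2** (coordinate form): the Abel transform is bounded from
`L^{2,1}(G//K)` to `L^∞(A/W)`.  Here `T s v w` is the unique `t ≥ |s|` with
`(cosh t)² = (cosh s + eˢ|v|²)² + e^{2s}|w|²`, and `ρ = (m₁ + 2m₂)/2`. -/
theorem abel_transform_L21_Linfty (m₁ m₂ : ℕ) (hm₁ : 1 ≤ m₁)
    (T : ℝ → EuclideanSpace ℝ (Fin m₁) → EuclideanSpace ℝ (Fin m₂) → ℝ)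
    (hT : ∀ (s : ℝ) (v : EuclideanSpace ℝ (Fin m₁)) (w : EuclideanSpace ℝ (Fin m₂)),
      |s| ≤ T s v w ∧
      Real.cosh (T s v w) ^ 2 =
        (Real.cosh s + Real.exp s * ‖v‖ ^ 2) ^ 2 + Real.exp (2 * s) * ‖w‖ ^ 2) :
    ∃ C : ℝ≥0, ∀ (s : ℝ) (F : ℝ → ℝ≥0∞), Measurable F →
      ENNReal.ofReal (Real.exp (((m₁ : ℝ) + 2 * (m₂ : ℝ)) / 2 * s)) *
          (∫⁻ p : EuclideanSpace ℝ (Fin m₁) × EuclideanSpace ℝ (Fin m₂),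
            F (T s p.1 p.2)) ≤
        C * lorentz21 (nuMeasure m₁ m₂) F := by
  have : Nonempty (Fin m₁) := ⟨⟨0, hm₁⟩⟩
  simpa [Measure.volume_eq_prod] using abel_transform_L21_Linfty_general volume volume T hT

end
end

section
/- There exists a constant C = C(m₁, m₂) ≥ 1 such that for every u > 0, C⁻¹ · φ(u) ≤ sup_{r ∈ [−u, u]} e^{−ρ r} ∫_{−u}^{r} ψ̃(u,s) e^{ρ s} ds ≤ C · φ(u), where φ(u) = u^{m₁+m₂} for 0 < u ≤ 1 and φ(u) = e^{ρ u} for u ≥ 1. -/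
open MeasureTheory ENNReal NNReal

noncomputable section

/-- The kernel `ψ̃(t,s) = sinh t · (cosh t)^{m₂/2} · (cosh t − cosh s)^{(m₁+m₂−2)/2}`
(real powers; the factor `(cosh t)^{m₂/2}` is automatically `1` when `m₂ = 0`). -/
def psiT (m₁ m₂ : ℕ) (t s : ℝ) : ℝ :=
  Real.sinh t * Real.cosh t ^ ((m₂ : ℝ) / 2) *
    (Real.cosh t - Real.cosh s) ^ (((m₁ : ℝ) + (m₂ : ℝ) - 2) / 2)

/-- `φ(u) = u^{m₁+m₂}` for `0 < u ≤ 1` and `φ(u) = e^{ρu}` for `u ≥ 1`,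
with `ρ = (m₁ + 2m₂)/2`. -/
def phiFn (m₁ m₂ : ℕ) (u : ℝ) : ℝ :=
  if u ≤ 1 then u ^ (m₁ + m₂) else Real.exp (((m₁ : ℝ) + 2 * (m₂ : ℝ)) / 2 * u)

/-!
On `|s| ≤ u` the identity `cosh u - cosh s = 2 sinh ((u + s) / 2) sinh ((u - s) / 2)` and
`sinh x ≍ min 1 x * e^x` give `cosh u - cosh s ≍ min 1 u * min 1 (u - |s|) * e^u`. Hence the kernel
is comparable to `min 1 u ^ (a + 1) * e^{ρu}` times the boundary weight `min 1 (u - |s|) ^ a`, and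
only the exponentially weighted means of this weight matter. They are at most of order
`min 1 u ^ (a + 1)`: within `min 1 u` of `±u` the weight has mass of that order because `-1 < a`,
and away from `±u` it is constant while `e^{ρ(s - r)}` has mass of order `min 1 u`. The order is
attained at `r = u - min 1 u / 2`, by the part of the integral over `[u - min 1 u, r]`.
-/

/-- The relation `x ≍ y` with explicit constant `C ≥ 1`, for nonnegative elements of an ordered
semiring. It is phrased without inverses so that it makes sense both in `ℝ` and in `ℝ≥0∞`, and so
that the zero elements are comparable. -/
structure ComparableWith {α : Type*} [Semiring α] [PartialOrder α] (C x y : α) : Prop where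
  one_le_const : 1 ≤ C
  left_nonneg : 0 ≤ x
  right_nonneg : 0 ≤ y
  le : x ≤ C * y
  ge : y ≤ C * x

namespace ComparableWith

theorem symm {α : Type*} [Semiring α] [PartialOrder α] {C x y : α} (h : ComparableWith C x y) :
    ComparableWith C y x :=
  ⟨h.one_le_const, h.right_nonneg, h.left_nonneg, h.ge, h.le⟩

section OrderedSemiring

variable {α : Type*} [CommSemiring α] [PartialOrder α] [IsOrderedRing α] {C D c x y z x' y' : α}

theorem const_nonneg (h : ComparableWith C x y) : 0 ≤ C :=
  zero_le_one.trans h.one_le_const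

theorem mul (h : ComparableWith C x y) (h' : ComparableWith D x' y') :
    ComparableWith (C * D) (x * x') (y * y') where
  one_le_const := one_le_mul_of_one_le_of_one_le h.one_le_const h'.one_le_const
  left_nonneg := mul_nonneg h.left_nonneg h'.left_nonneg
  right_nonneg := mul_nonneg h.right_nonneg h'.right_nonneg
  le := (mul_le_mul h.le h'.le h'.left_nonneg (h.left_nonneg.trans h.le)).trans_eq
    (mul_mul_mul_comm C y D y')
  ge := (mul_le_mul h.ge h'.ge h'.right_nonneg (h.right_nonneg.trans h.ge)).trans_eq
    (mul_mul_mul_comm C x D x')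

theorem mul_right (h : ComparableWith C x y) (hc : 0 ≤ c) :
    ComparableWith C (x * c) (y * c) where
  one_le_const := h.one_le_const
  left_nonneg := mul_nonneg h.left_nonneg hc
  right_nonneg := mul_nonneg h.right_nonneg hc
  le := (mul_le_mul_of_nonneg_right h.le hc).trans_eq (mul_assoc C y c)
  ge := (mul_le_mul_of_nonneg_right h.ge hc).trans_eq (mul_assoc C x c)

theorem trans (h : ComparableWith C x y) (h' : ComparableWith D y z) :
    ComparableWith (C * D) x z where
  one_le_const := one_le_mul_of_one_le_of_one_le h.one_le_const h'.one_le_const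
  left_nonneg := h.left_nonneg
  right_nonneg := h'.right_nonneg
  le := calc
    x ≤ C * y := h.le
    _ ≤ C * (D * z) := mul_le_mul_of_nonneg_left h'.le h.const_nonneg
    _ = C * D * z := (mul_assoc C D z).symm
  ge := calc
    z ≤ D * y := h'.ge
    _ ≤ D * (C * x) := mul_le_mul_of_nonneg_left h.ge h'.const_nonneg
    _ = C * D * x := by rw [mul_left_comm, mul_assoc]

end OrderedSemiring

variable {C x y : ℝ}

theorem min_one (h : ComparableWith C x y) : ComparableWith C (min 1 x) (min 1 y) where
  one_le_const := h.one_le_const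
  left_nonneg := le_min zero_le_one h.left_nonneg
  right_nonneg := le_min zero_le_one h.right_nonneg
  le := by
    rw [mul_min_of_nonneg _ _ h.const_nonneg, mul_one]
    exact min_le_min h.one_le_const h.le
  ge := by
    rw [mul_min_of_nonneg _ _ h.const_nonneg, mul_one]
    exact min_le_min h.one_le_const h.ge

theorem rpow_le (h : ComparableWith C x y) (a : ℝ) : x ^ a ≤ C ^ |a| * y ^ a := by
  have hC : 0 < C := one_pos.trans_le h.one_le_const
  rcases le_or_gt 0 a with ha | ha
  · rw [abs_of_nonneg ha, ← Real.mul_rpow hC.le h.right_nonneg]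
    exact Real.rpow_le_rpow h.left_nonneg h.le ha
  rcases h.right_nonneg.eq_or_lt with hy | hy
  · have hx : x = 0 := le_antisymm (by simpa only [← hy, mul_zero] using h.le) h.left_nonneg
    rw [← hy, hx, Real.zero_rpow ha.ne, mul_zero]
  · have hCx : C ^ a * x ^ a ≤ y ^ a := by
      rw [← Real.mul_rpow hC.le h.left_nonneg]
      exact Real.rpow_le_rpow_of_nonpos hy h.ge ha.le
    rwa [abs_of_neg ha, Real.rpow_neg hC.le, ← div_eq_inv_mul,
      le_div_iff₀' (Real.rpow_pos_of_pos hC a)]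

theorem rpow (h : ComparableWith C x y) (a : ℝ) : ComparableWith (C ^ |a|) (x ^ a) (y ^ a) where
  one_le_const := Real.one_le_rpow h.one_le_const (abs_nonneg a)
  left_nonneg := Real.rpow_nonneg h.left_nonneg a
  right_nonneg := Real.rpow_nonneg h.right_nonneg a
  le := h.rpow_le a
  ge := h.symm.rpow_le a

theorem ofReal (h : ComparableWith C x y) :
    ComparableWith (ENNReal.ofReal C) (ENNReal.ofReal x) (ENNReal.ofReal y) where
  one_le_const := ENNReal.one_le_ofReal.2 h.one_le_const
  left_nonneg := zero_le
  right_nonneg := zero_le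
  le := by
    rw [← ENNReal.ofReal_mul h.const_nonneg]
    exact ENNReal.ofReal_le_ofReal h.le
  ge := by
    rw [← ENNReal.ofReal_mul h.const_nonneg]
    exact ENNReal.ofReal_le_ofReal h.ge

theorem inv_mul_le_and_le_mul {C : ℝ≥0} {x y : ℝ≥0∞}
    (h : ComparableWith (C : ℝ≥0∞) x y) : (C : ℝ≥0∞)⁻¹ * y ≤ x ∧ x ≤ C * y :=
  ⟨(ENNReal.inv_mul_le_iff (one_pos.trans_le h.one_le_const).ne' ENNReal.coe_ne_top).2 h.ge, h.le⟩

end ComparableWith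

theorem comparableWith_sinh {x : ℝ} (hx : 0 ≤ x) :
    ComparableWith 3 (Real.sinh x) (min 1 x * Real.exp x) := by
  have sinh_eq_mul_exp : Real.sinh x = (1 - Real.exp (-2 * x)) / 2 * Real.exp x := by
    have : Real.exp (-x) = Real.exp (-2 * x) * Real.exp x := by rw [← Real.exp_add]; ring_nf
    rw [Real.sinh_eq, this]
    ring
  have exp_lower : 1 - 2 * x ≤ Real.exp (-2 * x) := by linarith [Real.add_one_le_exp (-2 * x)]
  have exp_upper : Real.exp (-2 * x) * (1 + 2 * x) ≤ 1 := by
    rw [show -2 * x = -(2 * x) by ring, Real.exp_neg, inv_mul_le_one₀ (Real.exp_pos _)]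
    linarith [Real.add_one_le_exp (2 * x)]
  have exp_nonneg := (Real.exp_pos (-2 * x)).le
  refine ⟨by norm_num, Real.sinh_nonneg_iff.2 hx, by positivity, ?_, ?_⟩
  · rw [sinh_eq_mul_exp, ← mul_assoc]
    gcongr
    rcases min_cases 1 x with ⟨h, _⟩ | ⟨h, _⟩ <;> rw [h] <;> linarith
  · rw [sinh_eq_mul_exp, ← mul_assoc]
    gcongr
    rcases min_cases 1 x with ⟨h, _⟩ | ⟨h, _⟩ <;> rw [h] <;> nlinarith

theorem comparableWith_cosh {x : ℝ} (hx : 0 ≤ x) :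
    ComparableWith 2 (Real.cosh x) (Real.exp x) := by
  have exp_neg_le : Real.exp (-x) ≤ Real.exp x := Real.exp_le_exp.2 (by linarith)
  have exp_neg_pos := Real.exp_pos (-x)
  constructor <;> first | positivity | (rw [Real.cosh_eq]; linarith) | norm_num

theorem cosh_sub_cosh (u s : ℝ) :
    Real.cosh u - Real.cosh s = 2 * (Real.sinh ((u + s) / 2) * Real.sinh ((u - s) / 2)) := by
  have hu : Real.cosh u = Real.cosh ((u + s) / 2 + (u - s) / 2) := by ring_nf
  have hs : Real.cosh s = Real.cosh ((u + s) / 2 - (u - s) / 2) := by ring_nf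
  rw [hu, hs, Real.cosh_add, Real.cosh_sub]
  ring

theorem comparableWith_cosh_sub_cosh {u s : ℝ} (hs : |s| ≤ u) :
    ComparableWith 72 (Real.cosh u - Real.cosh s)
      (min 1 u * min 1 (u - |s|) * Real.exp u) := by
  rw [← Real.cosh_abs s, cosh_sub_cosh]
  have hs₀ := abs_nonneg s
  generalize |s| = s at hs hs₀ ⊢
  have h_add : ComparableWith 2 ((u + s) / 2) u := by constructor <;> linarith
  have h_sub : ComparableWith 2 ((u - s) / 2) (u - s) := by constructor <;> linarith
  have sinh_add := (comparableWith_sinh h_add.left_nonneg).trans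
    (h_add.min_one.mul_right (Real.exp_pos ((u + s) / 2)).le)
  have sinh_sub := (comparableWith_sinh h_sub.left_nonneg).trans
    (h_sub.min_one.mul_right (Real.exp_pos ((u - s) / 2)).le)
  have two : ComparableWith (2 : ℝ) 2 1 := by constructor <;> norm_num
  have const_eq : (72 : ℝ) = 2 * (3 * 2 * (3 * 2)) := by norm_num
  have bound_eq : min 1 u * min 1 (u - s) * Real.exp u =
      1 * (min 1 u * Real.exp ((u + s) / 2) * (min 1 (u - s) * Real.exp ((u - s) / 2))) := by
    have : Real.exp u = Real.exp ((u + s) / 2) * Real.exp ((u - s) / 2) := by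
      rw [← Real.exp_add]
      ring_nf
    rw [this]
    ring
  rw [const_eq, bound_eq]
  exact two.mul (sinh_add.mul sinh_sub)

/-- The kernel `sinh t · (cosh t)^b · (cosh t − cosh s)^a` with arbitrary real exponents; `psiT` is
the case `a = (m₁ + m₂ - 2) / 2`, `b = m₂ / 2`. -/
def coshKernel (a b t s : ℝ) : ℝ :=
  Real.sinh t * Real.cosh t ^ b * (Real.cosh t - Real.cosh s) ^ a

/-- The boundary singularity `dist(s, {-u, u})^a` on `[-u, u]`, with the distance truncated
at `1`. -/
def boundaryWeight (a u s : ℝ) : ℝ :=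
  min 1 (u - |s|) ^ a

theorem comparableWith_coshKernel (a b : ℝ) {u s : ℝ} (hu : 0 < u) (hs : |s| ≤ u) :
    ComparableWith (3 * 2 ^ |b| * 72 ^ |a|) (coshKernel a b u s)
      (boundaryWeight a u s * (min 1 u ^ (a + 1) * Real.exp ((1 + a + b) * u))) := by
  have hδ : 0 < min 1 u := lt_min one_pos hu
  have hdist : 0 ≤ min 1 (u - |s|) := le_min zero_le_one (sub_nonneg.2 hs)
  have bound_eq : boundaryWeight a u s * (min 1 u ^ (a + 1) * Real.exp ((1 + a + b) * u)) =
      min 1 u * Real.exp u * Real.exp u ^ b *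
        (min 1 u * min 1 (u - |s|) * Real.exp u) ^ a := by
    have exp_split : Real.exp ((1 + a + b) * u) =
        Real.exp u * Real.exp (u * b) * Real.exp (u * a) := by
      rw [← Real.exp_add, ← Real.exp_add]
      ring_nf
    rw [boundaryWeight, Real.mul_rpow (by positivity) (Real.exp_pos u).le,
      Real.mul_rpow hδ.le hdist, ← Real.exp_mul, ← Real.exp_mul, Real.rpow_add_one hδ.ne',
      exp_split]
    ring
  rw [bound_eq]
  exact ((comparableWith_sinh hu.le).mul ((comparableWith_cosh hu.le).rpow b)).mul
    ((comparableWith_cosh_sub_cosh hs).rpow a)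

/-- The exponentially weighted mean `e^{-ρr} ∫_{-u}^r f(s) e^{ρs} ds`, valued in `[0, ∞]`, so that
negative values of `f` count as `0`. -/
def expMean (ρ : ℝ) (f : ℝ → ℝ) (u r : ℝ) : ℝ≥0∞ :=
  ENNReal.ofReal (Real.exp (-ρ * r)) *
    ∫⁻ s in Set.Icc (-u) r, ENNReal.ofReal (f s * Real.exp (ρ * s))

/-- The supremum of `expMean ρ f u r` over `r ∈ [-u, u]`. -/
def supExpMean (ρ : ℝ) (f : ℝ → ℝ) (u : ℝ) : ℝ≥0∞ :=
  ⨆ r ∈ Set.Icc (-u) u, expMean ρ f u r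

theorem expMean_eq_setLIntegral (ρ : ℝ) (f : ℝ → ℝ) (u r : ℝ) :
    expMean ρ f u r =
      ∫⁻ s in Set.Icc (-u) r, ENNReal.ofReal (f s * Real.exp (ρ * (s - r))) := by
  rw [expMean, ← lintegral_const_mul' _ _ ENNReal.ofReal_ne_top]
  refine lintegral_congr fun s => ?_
  rw [← ENNReal.ofReal_mul (Real.exp_pos _).le, mul_left_comm, ← Real.exp_add]
  ring_nf

theorem expMean_le_mul_expMean {ρ c u r : ℝ} {f g : ℝ → ℝ} (hc : 0 ≤ c)
    (hfg : ∀ s ∈ Set.Icc (-u) r, f s ≤ c * g s) :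
    expMean ρ f u r ≤ ENNReal.ofReal c * expMean ρ g u r := by
  rw [expMean_eq_setLIntegral, expMean_eq_setLIntegral,
    ← lintegral_const_mul' _ _ ENNReal.ofReal_ne_top]
  refine setLIntegral_mono' measurableSet_Icc fun s hs => ?_
  rw [← ENNReal.ofReal_mul hc, ← mul_assoc]
  exact ENNReal.ofReal_le_ofReal (mul_le_mul_of_nonneg_right (hfg s hs) (Real.exp_pos _).le)

theorem expMean_le_supExpMean {ρ u r : ℝ} {f : ℝ → ℝ} (hr : r ∈ Set.Icc (-u) u) :
    expMean ρ f u r ≤ supExpMean ρ f u :=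
  le_iSup₂ (f := fun r (_ : r ∈ Set.Icc (-u) u) => expMean ρ f u r) r hr

theorem supExpMean_le_mul_supExpMean {ρ c u : ℝ} {f g : ℝ → ℝ} (hc : 0 ≤ c)
    (hfg : ∀ s, |s| ≤ u → f s ≤ c * g s) :
    supExpMean ρ f u ≤ ENNReal.ofReal c * supExpMean ρ g u := by
  refine iSup₂_le fun r hr => ?_
  calc expMean ρ f u r ≤ ENNReal.ofReal c * expMean ρ g u r :=
        expMean_le_mul_expMean hc fun s hs => hfg s (abs_le.2 ⟨hs.1, hs.2.trans hr.2⟩)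
    _ ≤ ENNReal.ofReal c * supExpMean ρ g u := by gcongr; exact expMean_le_supExpMean hr

theorem comparableWith_supExpMean {ρ C c u : ℝ} {f g : ℝ → ℝ} (hC : 1 ≤ C) (hc : 0 < c)
    (hfg : ∀ s, |s| ≤ u → ComparableWith C (f s) (g s * c)) :
    ComparableWith (ENNReal.ofReal C) (supExpMean ρ f u)
      (supExpMean ρ g u * ENNReal.ofReal c) where
  one_le_const := ENNReal.one_le_ofReal.2 hC
  left_nonneg := zero_le
  right_nonneg := zero_le
  le := by
    have hC₀ : 0 ≤ C := by linarith
    calc supExpMean ρ f u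
        ≤ ENNReal.ofReal (C * c) * supExpMean ρ g u :=
          supExpMean_le_mul_supExpMean (by positivity) fun s hs =>
            (hfg s hs).le.trans_eq (by ring)
      _ = ENNReal.ofReal C * (supExpMean ρ g u * ENNReal.ofReal c) := by
          rw [ENNReal.ofReal_mul hC₀, mul_assoc, mul_comm (ENNReal.ofReal c)]
  ge := by
    have : 0 ≤ C := by linarith
    calc supExpMean ρ g u * ENNReal.ofReal c
        ≤ ENNReal.ofReal (C / c) * supExpMean ρ f u * ENNReal.ofReal c := by
          gcongr
          refine supExpMean_le_mul_supExpMean (by positivity) fun s hs => ?_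
          rw [div_mul_eq_mul_div, le_div_iff₀ hc]
          exact (hfg s hs).ge
      _ = ENNReal.ofReal C * supExpMean ρ f u := by
          rw [mul_right_comm, ← ENNReal.ofReal_mul (by positivity), div_mul_cancel₀ _ hc.ne']

theorem lintegral_Icc_rpow {a δ : ℝ} (ha : -1 < a) (hδ : 0 ≤ δ) :
    ∫⁻ x in Set.Icc 0 δ, ENNReal.ofReal (x ^ a) = ENNReal.ofReal (δ ^ (a + 1) / (a + 1)) := by
  have integrable : IntegrableOn (fun x : ℝ => x ^ a) (Set.Icc 0 δ) :=
    (intervalIntegrable_iff_integrableOn_Icc_of_le hδ).1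
      (intervalIntegral.intervalIntegrable_rpow' ha)
  have nonneg : ∀ᵐ x ∂volume.restrict (Set.Icc 0 δ), 0 ≤ x ^ a :=
    ae_restrict_of_forall_mem measurableSet_Icc fun x hx => Real.rpow_nonneg hx.1 a
  rw [← ofReal_integral_eq_lintegral_ofReal integrable nonneg, integral_Icc_eq_integral_Ioc,
    ← intervalIntegral.integral_of_le hδ, integral_rpow (Or.inl ha),
    Real.zero_rpow (by linarith), sub_zero]

theorem lintegral_Iic_exp {ρ : ℝ} (hρ : 0 < ρ) (r : ℝ) :
    ∫⁻ s in Set.Iic r, ENNReal.ofReal (Real.exp (ρ * (s - r))) = ENNReal.ofReal (1 / ρ) := by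
  have exp_eq : ∀ s, Real.exp (ρ * (s - r)) = Real.exp (ρ * s) / Real.exp (ρ * r) := fun s => by
    rw [mul_sub, Real.exp_sub]
  simp only [exp_eq]
  rw [← ofReal_integral_eq_lintegral_ofReal ((integrableOn_exp_mul_Iic hρ r).div_const _)
    (ae_of_all _ fun _ => by positivity), integral_div, integral_exp_mul_Iic hρ, div_right_comm,
    div_self (Real.exp_ne_zero _)]

theorem lintegral_Icc_exp_le {ρ u r : ℝ} (hρ : 0 < ρ) (hr : r ≤ u) :
    ∫⁻ s in Set.Icc (-u) r, ENNReal.ofReal (Real.exp (ρ * (s - r))) ≤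
      ENNReal.ofReal ((2 + 1 / ρ) * min 1 u) := by
  have hρ_inv : 0 < 1 / ρ := one_div_pos.2 hρ
  rcases le_total 1 u with h | h
  · calc ∫⁻ s in Set.Icc (-u) r, ENNReal.ofReal (Real.exp (ρ * (s - r)))
        ≤ ∫⁻ s in Set.Iic r, ENNReal.ofReal (Real.exp (ρ * (s - r))) :=
          lintegral_mono_set Set.Icc_subset_Iic_self
      _ = ENNReal.ofReal (1 / ρ) := lintegral_Iic_exp hρ r
      _ ≤ ENNReal.ofReal ((2 + 1 / ρ) * min 1 u) := by
          rw [min_eq_left h]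
          exact ENNReal.ofReal_le_ofReal (by linarith)
  · calc ∫⁻ s in Set.Icc (-u) r, ENNReal.ofReal (Real.exp (ρ * (s - r)))
        ≤ ∫⁻ _ in Set.Icc (-u) r, 1 := by
          refine setLIntegral_mono' measurableSet_Icc fun s hs => ?_
          rw [ENNReal.ofReal_le_one, Real.exp_le_one_iff]
          exact mul_nonpos_of_nonneg_of_nonpos hρ.le (sub_nonpos.2 hs.2)
      _ = ENNReal.ofReal (r + u) := by rw [setLIntegral_one, Real.volume_Icc, sub_neg_eq_add]
      _ ≤ ENNReal.ofReal ((2 + 1 / ρ) * min 1 u) := by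
          rw [min_eq_right h]
          rcases le_or_gt 0 u with hu | hu
          · exact ENNReal.ofReal_le_ofReal (by nlinarith)
          · exact (ENNReal.ofReal_of_nonpos (by linarith)).trans_le zero_le

/-- The function `x^a` cut off to `[0, δ]`; its translates carry the endpoint singularities of
`boundaryWeight`. -/
def truncatedRpow (a δ x : ℝ) : ℝ≥0∞ :=
  (Set.Icc 0 δ).indicator (fun x => ENNReal.ofReal (x ^ a)) x

@[fun_prop]
theorem measurable_truncatedRpow (a δ : ℝ) : Measurable (truncatedRpow a δ) :=
  Measurable.indicator (by fun_prop) measurableSet_Icc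

theorem lintegral_truncatedRpow {a δ : ℝ} (ha : -1 < a) (hδ : 0 ≤ δ) :
    ∫⁻ x, truncatedRpow a δ x = ENNReal.ofReal (δ ^ (a + 1) / (a + 1)) := by
  rw [← lintegral_Icc_rpow ha hδ, ← lintegral_indicator measurableSet_Icc]
  rfl

theorem ofReal_boundaryWeight_le {a u s : ℝ} (hs : |s| ≤ u) :
    ENNReal.ofReal (boundaryWeight a u s) ≤
      ENNReal.ofReal (min 1 u ^ a) +
        (truncatedRpow a (min 1 u) (u - s) + truncatedRpow a (min 1 u) (u + s)) := by
  rcases le_or_gt (u - |s|) (min 1 u) with hnear | hfar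
  · have weight_eq : ENNReal.ofReal (boundaryWeight a u s) =
        truncatedRpow a (min 1 u) (u - |s|) := by
      have hmem : u - |s| ∈ Set.Icc 0 (min 1 u) := ⟨sub_nonneg.2 hs, hnear⟩
      rw [truncatedRpow, Set.indicator_of_mem hmem, boundaryWeight,
        min_eq_right (hnear.trans (min_le_left 1 u))]
    rw [weight_eq]
    refine le_trans ?_ le_add_self
    rcases abs_choice s with h | h <;> rw [h]
    · exact le_self_add
    · rw [sub_neg_eq_add]
      exact le_add_self
  · have hu : 1 ≤ u := by
      by_contra! h
      rw [min_eq_right h.le] at hfar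
      linarith [abs_nonneg s]
    rw [min_eq_left hu] at hfar ⊢
    rw [boundaryWeight, min_eq_left hfar.le]
    exact le_self_add

theorem expMean_boundaryWeight_le {a ρ u r : ℝ} (ha : -1 < a) (hρ : 0 < ρ) (hu : 0 < u)
    (hr : r ≤ u) :
    expMean ρ (boundaryWeight a u) u r ≤
      ENNReal.ofReal ((2 + 1 / ρ + 2 / (a + 1)) * min 1 u ^ (a + 1)) := by
  have hδ : 0 < min 1 u := lt_min one_pos hu
  have ha₁ : 0 < a + 1 := by linarith
  rw [expMean_eq_setLIntegral]
  set δ := min 1 u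
  calc ∫⁻ s in Set.Icc (-u) r, ENNReal.ofReal (boundaryWeight a u s * Real.exp (ρ * (s - r)))
      ≤ ∫⁻ s in Set.Icc (-u) r,
          (ENNReal.ofReal (δ ^ a) * ENNReal.ofReal (Real.exp (ρ * (s - r))) +
            (truncatedRpow a δ (u - s) + truncatedRpow a δ (u + s))) := by
        refine setLIntegral_mono' measurableSet_Icc fun s hs => ?_
        have exp_le_one : ENNReal.ofReal (Real.exp (ρ * (s - r))) ≤ 1 :=
          ENNReal.ofReal_le_one.2 <| Real.exp_le_one_iff.2 <|
            mul_nonpos_of_nonneg_of_nonpos hρ.le (sub_nonpos.2 hs.2)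
        rw [ENNReal.ofReal_mul' (Real.exp_pos _).le]
        have weight_le :=
          ofReal_boundaryWeight_le (a := a) (abs_le.2 ⟨hs.1, hs.2.trans hr⟩)
        refine (mul_le_mul_left weight_le _).trans ?_
        rw [add_mul]
        gcongr
        exact mul_le_of_le_one_right zero_le exp_le_one
    _ ≤ ENNReal.ofReal (δ ^ a) * ENNReal.ofReal ((2 + 1 / ρ) * δ) +
          (ENNReal.ofReal (δ ^ (a + 1) / (a + 1)) + ENNReal.ofReal (δ ^ (a + 1) / (a + 1))) := by
        rw [lintegral_add_left (by fun_prop), lintegral_add_left (by fun_prop),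
          lintegral_const_mul _ (by fun_prop), ← lintegral_truncatedRpow ha hδ.le]
        refine add_le_add ?_ (add_le_add ?_ ?_)
        · gcongr
          exact lintegral_Icc_exp_le hρ hr
        · exact (setLIntegral_le_lintegral _ _).trans_eq
            (lintegral_sub_left_eq_self (truncatedRpow a δ) u)
        · exact (setLIntegral_le_lintegral _ _).trans_eq
            (lintegral_add_left_eq_self (truncatedRpow a δ) u)
    _ = ENNReal.ofReal ((2 + 1 / ρ + 2 / (a + 1)) * δ ^ (a + 1)) := by
        rw [← ENNReal.ofReal_mul (by positivity), ← ENNReal.ofReal_add (by positivity)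
          (by positivity), ← ENNReal.ofReal_add (by positivity) (by positivity),
          Real.rpow_add_one hδ.ne']
        ring_nf

theorem le_boundaryWeight_mul_exp {a ρ u s : ℝ} (hρ : 0 ≤ ρ) (hu : 0 < u)
    (hs : s ∈ Set.Icc (u - min 1 u) (u - min 1 u / 2)) :
    min 1 u ^ a ≤ 2 ^ |a| * Real.exp ρ *
      (boundaryWeight a u s * Real.exp (ρ * (s - (u - min 1 u / 2)))) := by
  have hδ : 0 < min 1 u := lt_min one_pos hu
  have hδ₁ : min 1 u ≤ 1 := min_le_left 1 u
  have hδu : min 1 u ≤ u := min_le_right 1 u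
  obtain ⟨hs_lower, hs_upper⟩ := hs
  have weight_eq : boundaryWeight a u s = (u - s) ^ a := by
    rw [boundaryWeight, abs_of_nonneg (by linarith), min_eq_right (by linarith)]
  have dist_comparable : ComparableWith 2 (min 1 u) (u - s) := by constructor <;> linarith
  have one_le_exp : 1 ≤ Real.exp ρ * Real.exp (ρ * (s - (u - min 1 u / 2))) := by
    rw [← Real.exp_add, Real.one_le_exp_iff]
    nlinarith
  calc min 1 u ^ a ≤ 2 ^ |a| * (u - s) ^ a := dist_comparable.rpow_le a
    _ ≤ 2 ^ |a| * (u - s) ^ a * (Real.exp ρ * Real.exp (ρ * (s - (u - min 1 u / 2)))) :=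
        le_mul_of_one_le_right
          (mul_nonneg (by positivity) (Real.rpow_nonneg dist_comparable.right_nonneg a)) one_le_exp
    _ = _ := by rw [weight_eq]; ring

theorem le_expMean_boundaryWeight (a : ℝ) {ρ u : ℝ} (hρ : 0 ≤ ρ) (hu : 0 < u) :
    ENNReal.ofReal (min 1 u ^ (a + 1)) ≤
      ENNReal.ofReal (2 * (2 ^ |a| * Real.exp ρ)) *
        expMean ρ (boundaryWeight a u) u (u - min 1 u / 2) := by
  have hδ : 0 < min 1 u := lt_min one_pos hu
  have hδu : min 1 u ≤ u := min_le_right 1 u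
  have weight_le := fun s => le_boundaryWeight_mul_exp (a := a) (s := s) hρ hu
  rw [expMean_eq_setLIntegral, ENNReal.ofReal_mul zero_le_two, mul_assoc]
  set δ := min 1 u
  calc ENNReal.ofReal (δ ^ (a + 1))
      = ENNReal.ofReal 2 * ∫⁻ _ in Set.Icc (u - δ) (u - δ / 2), ENNReal.ofReal (δ ^ a) := by
        rw [setLIntegral_const, Real.volume_Icc, ← ENNReal.ofReal_mul (by positivity),
          ← ENNReal.ofReal_mul zero_le_two, Real.rpow_add_one hδ.ne']
        ring_nf
    _ ≤ _ := by
        gcongr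
        rw [← lintegral_const_mul' _ _ ENNReal.ofReal_ne_top]
        refine (setLIntegral_mono' measurableSet_Icc fun s hs => ?_).trans
          (lintegral_mono_set (Set.Icc_subset_Icc_left (by linarith)))
        rw [← ENNReal.ofReal_mul (by positivity)]
        exact ENNReal.ofReal_le_ofReal (weight_le s hs)

theorem exists_comparableWith_supExpMean_boundaryWeight {a ρ : ℝ} (ha : -1 < a) (hρ : 0 < ρ) :
    ∃ D : ℝ, ∀ u, 0 < u →
      ComparableWith (ENNReal.ofReal D) (supExpMean ρ (boundaryWeight a u) u)
        (ENNReal.ofReal (min 1 u ^ (a + 1))) := by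
  have ha₁ : 0 < a + 1 := by linarith
  have hE : 0 ≤ 2 + 1 / ρ + 2 / (a + 1) := by positivity
  refine ⟨max (2 + 1 / ρ + 2 / (a + 1)) (2 * (2 ^ |a| * Real.exp ρ)), fun u hu =>
    ⟨?_, zero_le, zero_le, ?_, ?_⟩⟩
  · have : 0 ≤ 1 / ρ + 2 / (a + 1) := by positivity
    exact ENNReal.one_le_ofReal.2 (le_max_of_le_left (by linarith))
  · refine iSup₂_le fun r hr => (expMean_boundaryWeight_le ha hρ hu hr.2).trans ?_
    rw [ENNReal.ofReal_mul hE]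
    gcongr
    exact le_max_left _ _
  · have hr : u - min 1 u / 2 ∈ Set.Icc (-u) u := by
      constructor <;> linarith [min_le_right 1 u, lt_min one_pos hu]
    refine (le_expMean_boundaryWeight a hρ.le hu).trans ?_
    gcongr
    · exact le_max_right _ _
    · exact expMean_le_supExpMean hr

/-- The growth profile `φ` for an arbitrary real exponent `d` near the origin and rate `ρ` at
infinity; `phiFn` is the case `d = m₁ + m₂`, `ρ = (m₁ + 2 m₂) / 2`. -/
def growthProfile (d ρ u : ℝ) : ℝ :=
  if u ≤ 1 then u ^ d else Real.exp (ρ * u)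

theorem comparableWith_growthProfile (d : ℝ) {ρ u : ℝ} (hρ : 0 ≤ ρ) (hu : 0 < u) :
    ComparableWith (Real.exp ρ) (min 1 u ^ d * Real.exp (ρ * u)) (growthProfile d ρ u) := by
  have one_le_exp : 1 ≤ Real.exp ρ := Real.one_le_exp hρ
  unfold growthProfile
  split_ifs with h
  · have comparable : ComparableWith (Real.exp ρ) (Real.exp (ρ * u)) 1 := by
      refine ⟨one_le_exp, (Real.exp_pos _).le, zero_le_one, ?_, ?_⟩
      · rw [mul_one, Real.exp_le_exp]
        exact mul_le_of_le_one_right hρ h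
      · exact one_le_mul_of_one_le_of_one_le one_le_exp (Real.one_le_exp (by positivity))
    rw [min_eq_right h]
    simpa only [one_mul, mul_comm (Real.exp _)] using
      comparable.mul_right (Real.rpow_nonneg hu.le d)
  · rw [min_eq_left (not_le.1 h).le, Real.one_rpow, one_mul]
    have := le_mul_of_one_le_left (Real.exp_pos (ρ * u)).le one_le_exp
    exact ⟨one_le_exp, (Real.exp_pos _).le, (Real.exp_pos _).le, this, this⟩

theorem exists_comparableWith_supExpMean_coshKernel {a b : ℝ} (ha : -1 < a)
    (hρ : 0 < 1 + a + b) :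
    ∃ C : ℝ≥0, ∀ u, 0 < u →
      ComparableWith (C : ℝ≥0∞) (supExpMean (1 + a + b) (coshKernel a b u) u)
        (ENNReal.ofReal (growthProfile (2 * (a + 1)) (1 + a + b) u)) := by
  obtain ⟨D, weight_comparable⟩ := exists_comparableWith_supExpMean_boundaryWeight ha hρ
  set ρ := 1 + a + b
  refine ⟨Real.toNNReal (3 * 2 ^ |b| * 72 ^ |a|) * (D.toNNReal * (Real.exp ρ).toNNReal),
    fun u hu => ?_⟩
  have hδ : 0 < min 1 u := lt_min one_pos hu
  have kernel_comparable : ∀ s, |s| ≤ u → ComparableWith (3 * 2 ^ |b| * 72 ^ |a|)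
      (coshKernel a b u s) (boundaryWeight a u s * (min 1 u ^ (a + 1) * Real.exp (ρ * u))) :=
    fun s => comparableWith_coshKernel a b hu
  have profile_eq : ENNReal.ofReal (min 1 u ^ (a + 1)) *
      ENNReal.ofReal (min 1 u ^ (a + 1) * Real.exp (ρ * u)) =
        ENNReal.ofReal (min 1 u ^ (2 * (a + 1)) * Real.exp (ρ * u)) := by
    rw [← ENNReal.ofReal_mul (by positivity), ← mul_assoc, ← Real.rpow_add hδ, two_mul]
  have one_le_const := (kernel_comparable 0 (abs_zero.trans_le hu.le)).one_le_const
  simp only [ENNReal.coe_mul]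
  refine (comparableWith_supExpMean one_le_const (by positivity) kernel_comparable).trans ?_
  refine ((weight_comparable u hu).mul_right zero_le).trans ?_
  rw [profile_eq]
  exact (comparableWith_growthProfile (2 * (a + 1)) hρ.le hu).ofReal

theorem phi_comparison_general {a b ρ : ℝ} (ha : -1 < a) (hρ : ρ = 1 + a + b) (hρ₀ : 0 < ρ) :
    ∃ C : ℝ≥0, 1 ≤ C ∧ ∀ u : ℝ, 0 < u →
      (C : ℝ≥0∞)⁻¹ * ENNReal.ofReal (growthProfile (2 * (a + 1)) ρ u) ≤
          supExpMean ρ (coshKernel a b u) u ∧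
        supExpMean ρ (coshKernel a b u) u ≤
          (C : ℝ≥0∞) * ENNReal.ofReal (growthProfile (2 * (a + 1)) ρ u) := by
  subst hρ
  obtain ⟨C, hC⟩ := exists_comparableWith_supExpMean_coshKernel ha hρ₀
  exact ⟨C, by exact_mod_cast (hC 1 one_pos).one_le_const,
    fun u hu => (hC u hu).inv_mul_le_and_le_mul⟩

theorem phiFn_eq_growthProfile (m₁ m₂ : ℕ) (u : ℝ) :
    phiFn m₁ m₂ u =
      growthProfile (2 * (((m₁ : ℝ) + m₂ - 2) / 2 + 1)) (((m₁ : ℝ) + 2 * m₂) / 2) u := by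
  have exponent_eq : 2 * (((m₁ : ℝ) + m₂ - 2) / 2 + 1) = ((m₁ + m₂ : ℕ) : ℝ) := by
    push_cast
    ring
  rw [phiFn, growthProfile, exponent_eq, Real.rpow_natCast]

/-- For every `u > 0`,
`φ(u) ≈ sup_{r ∈ [−u,u]} e^{−ρ r} ∫_{−u}^r ψ̃(u,s) e^{ρ s} ds`, where `ρ = (m₁+2m₂)/2`. -/
theorem phi_comparison (m₁ m₂ : ℕ) (hm₁ : 1 ≤ m₁) :
    ∃ C : ℝ≥0, 1 ≤ C ∧ ∀ u : ℝ, 0 < u →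
      ((C : ℝ≥0∞)⁻¹ * ENNReal.ofReal (phiFn m₁ m₂ u) ≤
        ⨆ r ∈ Set.Icc (-u) u,
          ENNReal.ofReal (Real.exp (-(((m₁ : ℝ) + 2 * (m₂ : ℝ)) / 2) * r)) *
            ∫⁻ s in Set.Icc (-u) r,
              ENNReal.ofReal
                (psiT m₁ m₂ u s * Real.exp (((m₁ : ℝ) + 2 * (m₂ : ℝ)) / 2 * s))) ∧
      ((⨆ r ∈ Set.Icc (-u) u,
          ENNReal.ofReal (Real.exp (-(((m₁ : ℝ) + 2 * (m₂ : ℝ)) / 2) * r)) *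
            ∫⁻ s in Set.Icc (-u) r,
              ENNReal.ofReal
                (psiT m₁ m₂ u s * Real.exp (((m₁ : ℝ) + 2 * (m₂ : ℝ)) / 2 * s))) ≤
        (C : ℝ≥0∞) * ENNReal.ofReal (phiFn m₁ m₂ u)) := by
  have hm : (1 : ℝ) ≤ m₁ := by exact_mod_cast hm₁
  simp only [phiFn_eq_growthProfile]
  exact phi_comparison_general (a := ((m₁ : ℝ) + m₂ - 2) / 2) (b := m₂ / 2)
    (by linarith [m₂.cast_nonneg (α := ℝ)]) (by ring) (by positivity)

end
end
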